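/- Let H ∈ (1/2, 1), γ ∈ (1 − 1/(2H), 1], ε̃ ∈ (0, H − (H−1/2)/γ), α ∈ (1, 1/(H−1/2)), T > 0, M ≥ 0, K ≥ 0, K_w ≥ 0. Let ψ : ℝ^d → ℝ^m satisfy ‖ψ(z)‖ ≤ M and ‖ψ(z₁) − ψ(z₂)‖ ≤ K ( ‖z₁ − z₂‖^γ + ‖z₁ − z₂‖ ) for all z, z₁, z₂, let x ∈ ℝ^d, and let w : [0, T] → ℝ^d satisfy ‖w(u) − w(s)‖ ≤ K_w |u − s|^{H−ε̃} for all u, s ∈ [0, T]. For t ∈ (0, T] define G(t) := (1/Γ(3/2−H)) [ t^{1/2−H} ψ(x + w(t)) + (H−1/2) t^{H−1/2} ( ∫₀ᵗ (t^{1/2−H} − r^{1/2−H}) (t−r)^{−1/2−H} dr ) ψ(x + w(t)) + (H−1/2) t^{H−1/2} ∫₀ᵗ ( ψ(x + w(t)) − ψ(x + w(r)) ) (t−r)^{−1/2−H} r^{1/2−H} dr ]. Then there exists a constant C > 0, depending only on H, γ, ε̃, α, M, K, such that ∫₀ᵀ ‖G(t)‖^α dt ≤ C ( T^{(1/2−H)α+1}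 + T^{(γ(H−ε̃)+1/2−H)α+1} K_w^{γα} + T^{(1/2−ε̃)α+1} K_w^{α} ). -/

import Mathlib

open MeasureTheory intervalIntegral

/-!
With `a = H - 1/2`, substituting `r = t s` in the two integrals of `G` extracts powers of `t`. The
first two terms of `G t` become multiples of `t ^ (-a) • ψ (x + w t)`. In the third term, the path
`ψ ∘ (x + w)` has modulus of continuity `h ↦ K (Kw ^ γ h ^ (γ β) + Kw h ^ β)` with `β = H - ε̃`, and
each power `h ^ p` with `p > a` contributes a Beta function times `t ^ (p - a)`, because
`(t - r) ^ (p - a - 1)` is still integrable at `r = t`. So `‖G t‖` is at most a sum of three powers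
of `t`, whose `α`-th powers are integrable at `0`.
-/

section Powers

lemma rpow_sum_le_card_rpow_mul_sum_rpow {ι : Type*} {s : Finset ι} {f : ι → ℝ} {α : ℝ}
    (hs : s.Nonempty) (hα : 0 ≤ α) (hf : ∀ i ∈ s, 0 ≤ f i) :
    (∑ i ∈ s, f i) ^ α ≤ (s.card : ℝ) ^ α * ∑ i ∈ s, f i ^ α := by
  obtain ⟨j, hj, hmax⟩ := s.exists_max_image f hs
  have hsum : ∑ i ∈ s, f i ≤ s.card * f j := by
    simpa only [nsmul_eq_mul] using s.sum_le_card_nsmul f (f j) hmax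
  have hterm : f j ^ α ≤ ∑ i ∈ s, f i ^ α :=
    Finset.single_le_sum (fun i hi ↦ Real.rpow_nonneg (hf i hi) α) hj
  calc (∑ i ∈ s, f i) ^ α ≤ (s.card * f j) ^ α :=
        Real.rpow_le_rpow (Finset.sum_nonneg hf) hsum hα
    _ = (s.card : ℝ) ^ α * f j ^ α := Real.mul_rpow (Nat.cast_nonneg _) (hf j hj)
    _ ≤ (s.card : ℝ) ^ α * ∑ i ∈ s, f i ^ α := by gcongr

lemma integral_norm_rpow_le_of_le_sum_rpow {ι E : Type*} [SeminormedAddCommGroup E]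
    {s : Finset ι} {c e : ι → ℝ} {f : ℝ → E} {α T : ℝ} (hs : s.Nonempty) (hα : 0 ≤ α)
    (hT : 0 ≤ T) (hc : ∀ i ∈ s, 0 ≤ c i) (he : ∀ i ∈ s, -1 < e i * α)
    (hf : ∀ t ∈ Set.Ioc 0 T, ‖f t‖ ≤ ∑ i ∈ s, c i * t ^ e i) :
    ∫ t in 0..T, ‖f t‖ ^ α ≤
      (s.card : ℝ) ^ α * ∑ i ∈ s, c i ^ α * (T ^ (e i * α + 1) / (e i * α + 1)) := by
  have hpow : ∀ t ∈ Set.Ioc 0 T,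
      ‖f t‖ ^ α ≤ (s.card : ℝ) ^ α * ∑ i ∈ s, c i ^ α * t ^ (e i * α) := fun t ht ↦ by
    have ht0 : 0 ≤ t := ht.1.le
    calc ‖f t‖ ^ α ≤ (∑ i ∈ s, c i * t ^ e i) ^ α :=
          Real.rpow_le_rpow (norm_nonneg _) (hf t ht) hα
      _ ≤ (s.card : ℝ) ^ α * ∑ i ∈ s, (c i * t ^ e i) ^ α :=
          rpow_sum_le_card_rpow_mul_sum_rpow hs hα fun i hi ↦
            mul_nonneg (hc i hi) (Real.rpow_nonneg ht0 _)
      _ = (s.card : ℝ) ^ α * ∑ i ∈ s, c i ^ α * t ^ (e i * α) := by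
          congr 1
          refine Finset.sum_congr rfl fun i hi ↦ ?_
          rw [Real.mul_rpow (hc i hi) (Real.rpow_nonneg ht0 _), Real.rpow_mul ht0]
  have hint : ∀ i ∈ s,
      IntervalIntegrable (fun t : ℝ ↦ c i ^ α * t ^ (e i * α)) volume 0 T :=
    fun i hi ↦ (intervalIntegrable_rpow' (he i hi)).const_mul _
  calc ∫ t in 0..T, ‖f t‖ ^ α
      ≤ ∫ t in 0..T, (s.card : ℝ) ^ α * ∑ i ∈ s, c i ^ α * t ^ (e i * α) := by
        rw [integral_of_le hT, integral_of_le hT]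
        refine integral_mono_of_nonneg (.of_forall fun t ↦ Real.rpow_nonneg (norm_nonneg _) α)
          ?_ (ae_restrict_of_forall_mem measurableSet_Ioc hpow)
        simpa only [Finset.sum_fn, IntegrableOn] using
          ((IntervalIntegrable.sum s hint).const_mul ((s.card : ℝ) ^ α)).1
    _ = (s.card : ℝ) ^ α * ∑ i ∈ s, c i ^ α * (T ^ (e i * α + 1) / (e i * α + 1)) := by
        rw [intervalIntegral.integral_const_mul, integral_finsetSum hint]
        congr 1
        refine Finset.sum_congr rfl fun i hi ↦ ?_
        have hpos : 0 < e i * α + 1 := by linarith [he i hi]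
        rw [intervalIntegral.integral_const_mul, integral_rpow (Or.inl (he i hi)),
          Real.zero_rpow hpos.ne', sub_zero]

end Powers

section BetaKernel

variable {p q t : ℝ}

lemma integral_sub_rpow_mul_rpow (ht : 0 < t) (hp : -1 < p) (hq : -1 < q) :
    ∫ r in 0..t, (t - r) ^ p * r ^ q =
      t ^ (p + q + 1) * ProbabilityTheory.beta (q + 1) (p + 1) := by
  have hbeta : ((ProbabilityTheory.beta (q + 1) (p + 1) : ℝ) : ℂ) =
      Complex.betaIntegral ((q + 1 : ℝ) : ℂ) ((p + 1 : ℝ) : ℂ) := by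
    rw [Complex.betaIntegral_eq_Gamma_mul_div _ _ (by simpa using by linarith)
      (by simpa using by linarith), ProbabilityTheory.beta]
    simp only [Complex.ofReal_div, Complex.ofReal_mul, ← Complex.Gamma_ofReal,
      Complex.ofReal_add]
  have hscaled := Complex.betaIntegral_scaled ((q + 1 : ℝ) : ℂ) ((p + 1 : ℝ) : ℂ) ht
  rw [← Complex.ofReal_inj, Complex.ofReal_mul, hbeta, Complex.ofReal_cpow ht.le,
    ← intervalIntegral.integral_ofReal]
  convert hscaled using 1
  · refine integral_congr fun r hr ↦ ?_
    rw [Set.uIcc_of_le ht.le] at hr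
    simp only [Complex.ofReal_mul, Complex.ofReal_cpow hr.1,
      Complex.ofReal_cpow (sub_nonneg.2 hr.2), Complex.ofReal_sub, Complex.ofReal_add,
      Complex.ofReal_one, add_sub_cancel_right, mul_comm]
  · congr 2
    push_cast
    ring

lemma intervalIntegrable_sub_rpow_mul_rpow (ht : 0 < t) (hp : -1 < p) (hq : -1 < q) :
    IntervalIntegrable (fun r ↦ (t - r) ^ p * r ^ q) volume 0 t := by
  apply intervalIntegrable_of_integral_ne_zero
  rw [integral_sub_rpow_mul_rpow ht hp hq]
  exact (mul_pos (Real.rpow_pos_of_pos ht _)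
    (ProbabilityTheory.beta_pos (by linarith) (by linarith))).ne'

lemma norm_integral_sub_rpow_mul_rpow_smul_le {ι F : Type*} [NormedAddCommGroup F]
    [NormedSpace ℝ F] {s : Finset ι} {k e : ι → ℝ} {g : ℝ → F} (ht : 0 < t) (hq : -1 < q)
    (hk : ∀ i ∈ s, 0 ≤ k i) (he : ∀ i ∈ s, -1 < p + e i)
    (hg : ∀ r ∈ Set.Ioc 0 t, ‖g r‖ ≤ ∑ i ∈ s, k i * (t - r) ^ e i) :
    ‖∫ r in 0..t, ((t - r) ^ p * r ^ q) • g r‖ ≤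
      ∑ i ∈ s, k i *
        (t ^ (p + e i + q + 1) * ProbabilityTheory.beta (q + 1) (p + e i + 1)) := by
  have hint : ∀ i ∈ s,
      IntervalIntegrable (fun r ↦ k i * ((t - r) ^ (p + e i) * r ^ q)) volume 0 t :=
    fun i hi ↦ (intervalIntegrable_sub_rpow_mul_rpow ht (he i hi) hq).const_mul _
  have hbound : ∀ r ∈ Set.Ioc 0 t, ‖((t - r) ^ p * r ^ q) • g r‖ ≤
      ∑ i ∈ s, k i * ((t - r) ^ (p + e i) * r ^ q) := fun r hr ↦ by
    have htr : 0 ≤ t - r := sub_nonneg.2 hr.2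
    have hr0 : 0 ≤ r := hr.1.le
    calc ‖((t - r) ^ p * r ^ q) • g r‖ = (t - r) ^ p * r ^ q * ‖g r‖ := by
          rw [norm_smul, Real.norm_of_nonneg (by positivity)]
      _ ≤ (t - r) ^ p * r ^ q * ∑ i ∈ s, k i * (t - r) ^ e i := by gcongr; exact hg r hr
      _ = ∑ i ∈ s, k i * ((t - r) ^ p * (t - r) ^ e i * r ^ q) := by
          rw [Finset.mul_sum]
          exact Finset.sum_congr rfl fun i _ ↦ by ring
      _ ≤ ∑ i ∈ s, k i * ((t - r) ^ (p + e i) * r ^ q) := by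
          gcongr with i hi
          · exact hk i hi
          · exact Real.le_rpow_add htr p (e i)
  calc ‖∫ r in 0..t, ((t - r) ^ p * r ^ q) • g r‖
      ≤ ∫ r in 0..t, ∑ i ∈ s, k i * ((t - r) ^ (p + e i) * r ^ q) :=
        norm_integral_le_of_norm_le ht.le (.of_forall hbound)
          (by simpa only [Finset.sum_fn] using IntervalIntegrable.sum s hint)
    _ = _ := by
        rw [integral_finsetSum hint]
        refine Finset.sum_congr rfl fun i hi ↦ ?_
        rw [intervalIntegral.integral_const_mul, integral_sub_rpow_mul_rpow ht (he i hi) hq]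

lemma integral_rpow_sub_rpow_mul_sub_rpow (ht : 0 < t) :
    ∫ r in 0..t, (t ^ q - r ^ q) * (t - r) ^ p =
      t ^ (p + q + 1) * ∫ s in (0 : ℝ)..1, (1 - s ^ q) * (1 - s) ^ p := by
  have hsubst := smul_integral_comp_mul_left (a := 0) (b := 1)
    (fun r ↦ (t ^ q - r ^ q) * (t - r) ^ p) t
  rw [mul_zero, mul_one] at hsubst
  rw [← hsubst, Real.rpow_add_one ht.ne', mul_comm (t ^ (p + q)), mul_assoc, smul_eq_mul,
    ← intervalIntegral.integral_const_mul (t ^ (p + q))]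
  congr 1
  refine integral_congr fun s hs ↦ ?_
  rw [Set.uIcc_of_le zero_le_one] at hs
  have hfactor : t - t * s = t * (1 - s) := by ring
  simp only [hfactor, Real.mul_rpow ht.le hs.1, Real.mul_rpow ht.le (sub_nonneg.2 hs.2),
    Real.rpow_add ht]
  ring

end BetaKernel

section WeylInverse

/-- The inverse `K_H⁻¹` of the Volterra operator of fractional Brownian motion, applied to the
primitive of `f` and written out by the Weyl representation of the fractional derivative of order
`H - 1 / 2`; the function `G` of the theorem is `weylInverse H (fun u ↦ ψ (x + w u))`. The singular
integral of `s ^ (1 / 2 - H) • f s` is split so that `f t - f r` appears in one term only. -/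
noncomputable def weylInverse {F : Type*} [NormedAddCommGroup F] [NormedSpace ℝ F] (H : ℝ)
    (f : ℝ → F) (t : ℝ) : F :=
  (1 / Real.Gamma (3 / 2 - H)) •
    ((t ^ (1 / 2 - H)) • f t
      + ((H - 1 / 2) * t ^ (H - 1 / 2) *
          ∫ r in 0..t, (t ^ (1 / 2 - H) - r ^ (1 / 2 - H)) * (t - r) ^ (-(1 / 2) - H)) • f t
      + ((H - 1 / 2) * t ^ (H - 1 / 2)) •
          ∫ r in 0..t, ((t - r) ^ (-(1 / 2) - H) * r ^ (1 / 2 - H)) • (f t - f r))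

/-- The factor multiplying `t ^ (1 / 2 - H) * ‖f t‖` in the bound for `weylInverse H f t`, coming
from the two terms in which only `f t` occurs. -/
noncomputable def weylBoundaryConst (H : ℝ) : ℝ :=
  1 / Real.Gamma (3 / 2 - H) *
    (1 + (H - 1 / 2) * |∫ s in (0 : ℝ)..1, (1 - s ^ (1 / 2 - H)) * (1 - s) ^ (-(1 / 2) - H)|)

/-- The factor multiplying `t ^ (p + 1 / 2 - H)` in the bound for `weylInverse H f t`, when `f` has
modulus of continuity `h ↦ h ^ p`. -/
noncomputable def weylHolderConst (H p : ℝ) : ℝ :=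
  1 / Real.Gamma (3 / 2 - H) * ((H - 1 / 2) * ProbabilityTheory.beta (3 / 2 - H) (p + 1 / 2 - H))

variable {H : ℝ}

lemma weylBoundaryConst_nonneg (hH : H ∈ Set.Ico (1 / 2 : ℝ) (3 / 2)) :
    0 ≤ weylBoundaryConst H := by
  have hGamma : 0 < Real.Gamma (3 / 2 - H) := Real.Gamma_pos_of_pos (by linarith [hH.2])
  have hH0 : 0 ≤ H - 1 / 2 := sub_nonneg.2 hH.1
  unfold weylBoundaryConst
  positivity

lemma weylHolderConst_nonneg {p : ℝ} (hH : H ∈ Set.Ico (1 / 2 : ℝ) (3 / 2)) (hp : H - 1 / 2 < p) :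
    0 ≤ weylHolderConst H p := by
  have hGamma : 0 < Real.Gamma (3 / 2 - H) := Real.Gamma_pos_of_pos (by linarith [hH.2])
  have hbeta : 0 < ProbabilityTheory.beta (3 / 2 - H) (p + 1 / 2 - H) :=
    ProbabilityTheory.beta_pos (by linarith [hH.2]) (by linarith)
  have hH0 : 0 ≤ H - 1 / 2 := sub_nonneg.2 hH.1
  unfold weylHolderConst
  positivity

variable {F : Type*} [NormedAddCommGroup F] [NormedSpace ℝ F] {t M : ℝ}

lemma norm_weyl_boundary_terms_le (hH : 1 / 2 ≤ H) (ht : 0 < t) {v : F} (hv : ‖v‖ ≤ M) :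
    ‖(t ^ (1 / 2 - H)) • v + ((H - 1 / 2) * t ^ (H - 1 / 2) *
        ∫ r in 0..t, (t ^ (1 / 2 - H) - r ^ (1 / 2 - H)) * (t - r) ^ (-(1 / 2) - H)) • v‖ ≤
      (1 + (H - 1 / 2) * |∫ s in (0 : ℝ)..1, (1 - s ^ (1 / 2 - H)) * (1 - s) ^ (-(1 / 2) - H)|) *
        M * t ^ (1 / 2 - H) := by
  rw [integral_rpow_sub_rpow_mul_sub_rpow ht]
  set A := ∫ s in (0 : ℝ)..1, (1 - s ^ (1 / 2 - H)) * (1 - s) ^ (-(1 / 2) - H)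
  have hpow : t ^ (H - 1 / 2) * t ^ (-(1 / 2) - H + (1 / 2 - H) + 1) = t ^ (1 / 2 - H) := by
    rw [← Real.rpow_add ht]
    ring_nf
  have hcoeff : |1 + (H - 1 / 2) * A| ≤ 1 + (H - 1 / 2) * |A| := by
    simpa only [abs_one, abs_mul, abs_of_nonneg (sub_nonneg.2 hH)] using
      abs_add_le 1 ((H - 1 / 2) * A)
  calc ‖(t ^ (1 / 2 - H)) • v +
        ((H - 1 / 2) * t ^ (H - 1 / 2) * (t ^ (-(1 / 2) - H + (1 / 2 - H) + 1) * A)) • v‖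
      = ‖((1 + (H - 1 / 2) * A) * t ^ (1 / 2 - H)) • v‖ := by
        rw [← add_smul, ← hpow]
        ring_nf
    _ = |1 + (H - 1 / 2) * A| * ‖v‖ * t ^ (1 / 2 - H) := by
        rw [norm_smul, norm_mul, Real.norm_eq_abs, Real.norm_of_nonneg (by positivity),
          mul_right_comm]
    _ ≤ (1 + (H - 1 / 2) * |A|) * M * t ^ (1 / 2 - H) := by gcongr

variable {ι : Type*} [Fintype ι] {k p : ι → ℝ} {f : ℝ → F}

lemma norm_weyl_singular_term_le (hH : H ∈ Set.Ico (1 / 2 : ℝ) (3 / 2)) (ht : 0 < t)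
    (hk : ∀ i, 0 ≤ k i) (hp : ∀ i, H - 1 / 2 < p i)
    (hf : ∀ r ∈ Set.Ioc 0 t, ‖f t - f r‖ ≤ ∑ i, k i * (t - r) ^ p i) :
    ‖((H - 1 / 2) * t ^ (H - 1 / 2)) •
        ∫ r in 0..t, ((t - r) ^ (-(1 / 2) - H) * r ^ (1 / 2 - H)) • (f t - f r)‖ ≤
      ∑ i, (H - 1 / 2) * ProbabilityTheory.beta (3 / 2 - H) (p i + 1 / 2 - H) * k i *
        t ^ (p i + 1 / 2 - H) := by
  have hH0 : 0 ≤ H - 1 / 2 := sub_nonneg.2 hH.1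
  have hintegral := norm_integral_sub_rpow_mul_rpow_smul_le (p := -(1 / 2) - H) (q := 1 / 2 - H)
    (s := Finset.univ) ht (by linarith [hH.2]) (fun i _ ↦ hk i)
    (fun i _ ↦ by linarith [hp i]) hf
  rw [norm_smul, Real.norm_of_nonneg (by positivity)]
  refine (mul_le_mul_of_nonneg_left hintegral (by positivity)).trans_eq ?_
  rw [Finset.mul_sum]
  refine Finset.sum_congr rfl fun i _ ↦ ?_
  have hpow : t ^ (p i + 1 / 2 - H) =
      t ^ (H - 1 / 2) * t ^ (-(1 / 2) - H + p i + (1 / 2 - H) + 1) := by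
    rw [← Real.rpow_add ht]
    ring_nf
  rw [hpow, show 1 / 2 - H + 1 = 3 / 2 - H by ring,
    show -(1 / 2) - H + p i + 1 = p i + 1 / 2 - H by ring]
  ring

lemma norm_weylInverse_le (hH : H ∈ Set.Ico (1 / 2 : ℝ) (3 / 2)) (ht : 0 < t) (hM : ‖f t‖ ≤ M)
    (hk : ∀ i, 0 ≤ k i) (hp : ∀ i, H - 1 / 2 < p i)
    (hf : ∀ r ∈ Set.Ioc 0 t, ‖f t - f r‖ ≤ ∑ i, k i * (t - r) ^ p i) :
    ‖weylInverse H f t‖ ≤ weylBoundaryConst H * M * t ^ (1 / 2 - H) +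
      ∑ i, weylHolderConst H (p i) * k i * t ^ (p i + 1 / 2 - H) := by
  have hGamma : 0 < Real.Gamma (3 / 2 - H) := Real.Gamma_pos_of_pos (by linarith [hH.2])
  rw [weylInverse, norm_smul, Real.norm_of_nonneg (by positivity)]
  refine (mul_le_mul_of_nonneg_left (norm_add_le_of_le (norm_weyl_boundary_terms_le hH.1 ht hM)
    (norm_weyl_singular_term_le hH ht hk hp hf)) (by positivity)).trans_eq ?_
  rw [mul_add, Finset.mul_sum]
  simp only [weylBoundaryConst, weylHolderConst, mul_assoc]

theorem integral_norm_weylInverse_rpow_le {α T : ℝ} (hH : H ∈ Set.Ico (1 / 2 : ℝ) (3 / 2))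
    (hα : 0 ≤ α) (hHα : (H - 1 / 2) * α < 1) (hT : 0 ≤ T) (hM : 0 ≤ M) (hk : ∀ i, 0 ≤ k i)
    (hp : ∀ i, H - 1 / 2 < p i) (hfM : ∀ t ∈ Set.Ioc 0 T, ‖f t‖ ≤ M)
    (hf : ∀ t ∈ Set.Ioc 0 T, ∀ r ∈ Set.Ioc 0 t,
      ‖f t - f r‖ ≤ ∑ i, k i * (t - r) ^ p i) :
    ∫ t in 0..T, ‖weylInverse H f t‖ ^ α ≤ ((Fintype.card ι : ℝ) + 1) ^ α *
      ((weylBoundaryConst H * M) ^ α * (T ^ ((1 / 2 - H) * α + 1) / ((1 / 2 - H) * α + 1)) +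
        ∑ i, (weylHolderConst H (p i) * k i) ^ α *
          (T ^ ((p i + 1 / 2 - H) * α + 1) / ((p i + 1 / 2 - H) * α + 1))) := by
  let c : Option ι → ℝ := fun o ↦
    o.elim (weylBoundaryConst H * M) fun i ↦ weylHolderConst H (p i) * k i
  let e : Option ι → ℝ := fun o ↦ o.elim (1 / 2 - H) fun i ↦ p i + 1 / 2 - H
  have hc : ∀ o, 0 ≤ c o
    | none => mul_nonneg (weylBoundaryConst_nonneg hH) hM
    | some i => mul_nonneg (weylHolderConst_nonneg hH (hp i)) (hk i)
  have he : ∀ o, -1 < e o * α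
    | none => by
      simp only [e, Option.elim_none]
      linarith
    | some i => by
      have : 0 ≤ (p i + 1 / 2 - H) * α := mul_nonneg (by linarith [hp i]) hα
      simp only [e, Option.elim_some]
      linarith
  have hG : ∀ t ∈ Set.Ioc 0 T, ‖weylInverse H f t‖ ≤ ∑ o, c o * t ^ e o := fun t ht ↦ by
    simpa only [c, e, Fintype.sum_option, Option.elim_none, Option.elim_some] using
      norm_weylInverse_le hH ht.1 (hfM t ht) hk hp (hf t ht)
  simpa only [c, e, Finset.card_univ, Fintype.card_option, Nat.cast_add_one, Fintype.sum_option,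
    Option.elim_none, Option.elim_some] using
    integral_norm_rpow_le_of_le_sum_rpow Finset.univ_nonempty hα hT (fun o _ ↦ hc o)
      (fun o _ ↦ he o) hG

end WeylInverse

lemma norm_comp_sub_comp_le_of_holder {S E F : Type*} [SeminormedAddCommGroup E]
    [SeminormedAddCommGroup F] {ψ : E → F} {w : S → E} {x : E} {K Kw γ β h : ℝ} {t r : S}
    (hK : 0 ≤ K) (hKw : 0 ≤ Kw) (hγ : 0 ≤ γ) (hh : 0 ≤ h)
    (hψ : ∀ z₁ z₂, ‖ψ z₁ - ψ z₂‖ ≤ K * (‖z₁ - z₂‖ ^ γ + ‖z₁ - z₂‖))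
    (hw : ‖w t - w r‖ ≤ Kw * h ^ β) :
    ‖ψ (x + w t) - ψ (x + w r)‖ ≤ K * Kw ^ γ * h ^ (γ * β) + K * Kw * h ^ β := by
  have hpow : (Kw * h ^ β) ^ γ = Kw ^ γ * h ^ (γ * β) := by
    rw [Real.mul_rpow hKw (by positivity), ← Real.rpow_mul hh, mul_comm β]
  calc ‖ψ (x + w t) - ψ (x + w r)‖ ≤ K * (‖w t - w r‖ ^ γ + ‖w t - w r‖) := by
        simpa only [add_sub_add_left_eq_sub] using hψ (x + w t) (x + w r)
    _ ≤ K * ((Kw * h ^ β) ^ γ + Kw * h ^ β) := by gcongr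
    _ = K * Kw ^ γ * h ^ (γ * β) + K * Kw * h ^ β := by
        rw [hpow]
        ring

lemma integral_norm_weylInverse_comp_rpow_le {E F : Type*} [SeminormedAddCommGroup E]
    [NormedAddCommGroup F] [NormedSpace ℝ F] {ψ : E → F} {w : ℝ → E} {x : E}
    {H γ β α M K T Kw : ℝ} (hH : H ∈ Set.Ico (1 / 2 : ℝ) (3 / 2)) (hγβ : H - 1 / 2 < γ * β)
    (hβ : H - 1 / 2 < β) (hα : 0 ≤ α) (hHα : (H - 1 / 2) * α < 1) (hM : 0 ≤ M) (hK : 0 ≤ K)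
    (hT : 0 ≤ T) (hKw : 0 ≤ Kw) (hψM : ∀ z, ‖ψ z‖ ≤ M)
    (hψ : ∀ z₁ z₂, ‖ψ z₁ - ψ z₂‖ ≤ K * (‖z₁ - z₂‖ ^ γ + ‖z₁ - z₂‖))
    (hw : ∀ u ∈ Set.Icc 0 T, ∀ s ∈ Set.Icc 0 T, ‖w u - w s‖ ≤ Kw * |u - s| ^ β) :
    ∫ t in 0..T, ‖weylInverse H (fun u ↦ ψ (x + w u)) t‖ ^ α ≤
      3 ^ α * (weylBoundaryConst H * M) ^ α / ((1 / 2 - H) * α + 1) *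
          T ^ ((1 / 2 - H) * α + 1) +
        3 ^ α * (weylHolderConst H (γ * β) * K) ^ α / ((γ * β + 1 / 2 - H) * α + 1) *
          (T ^ ((γ * β + 1 / 2 - H) * α + 1) * Kw ^ (γ * α)) +
        3 ^ α * (weylHolderConst H β * K) ^ α / ((β + 1 / 2 - H) * α + 1) *
          (T ^ ((β + 1 / 2 - H) * α + 1) * Kw ^ α) := by
  have hH0 : 0 ≤ H - 1 / 2 := sub_nonneg.2 hH.1
  have hγ : 0 ≤ γ := (pos_of_mul_pos_left (hH0.trans_lt hγβ) (hH0.trans hβ.le)).le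
  have hmodulus : ∀ t ∈ Set.Ioc 0 T, ∀ r ∈ Set.Ioc 0 t, ‖ψ (x + w t) - ψ (x + w r)‖ ≤
      ∑ i, ![K * Kw ^ γ, K * Kw] i * (t - r) ^ ![γ * β, β] i := fun t ht r hr ↦ by
    have htr : 0 ≤ t - r := sub_nonneg.2 hr.2
    have hwtr := hw t ⟨ht.1.le, ht.2⟩ r ⟨hr.1.le, hr.2.trans ht.2⟩
    rw [abs_of_nonneg htr] at hwtr
    simpa only [Fin.sum_univ_two, Matrix.cons_val_zero, Matrix.cons_val_one] using
      norm_comp_sub_comp_le_of_holder hK hKw hγ htr hψ hwtr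
  have hk : ∀ i, 0 ≤ ![K * Kw ^ γ, K * Kw] i :=
    Fin.forall_fin_two.2 ⟨mul_nonneg hK (Real.rpow_nonneg hKw γ), mul_nonneg hK hKw⟩
  have hbound := integral_norm_weylInverse_rpow_le hH hα hHα hT hM hk
    (Fin.forall_fin_two.2 ⟨hγβ, hβ⟩) (fun t _ ↦ hψM (x + w t)) hmodulus
  have hcard : ((Fintype.card (Fin 2) : ℕ) : ℝ) + 1 = 3 := by
    rw [Fintype.card_fin]
    norm_num
  have hc₁ : 0 ≤ weylHolderConst H (γ * β) * K := mul_nonneg (weylHolderConst_nonneg hH hγβ) hK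
  have hc₂ : 0 ≤ weylHolderConst H β * K := mul_nonneg (weylHolderConst_nonneg hH hβ) hK
  refine hbound.trans_eq ?_
  simp only [hcard, Fin.sum_univ_two, Matrix.cons_val_zero, Matrix.cons_val_one]
  rw [← mul_assoc _ K, ← mul_assoc _ K, Real.mul_rpow hc₁ (Real.rpow_nonneg hKw γ),
    Real.mul_rpow hc₂ hKw, ← Real.rpow_mul hKw]
  ring

lemma lt_half_and_sub_half_lt_mul_of_lt_sub_div {H γ ε : ℝ} (hH : 1 / 2 ≤ H)
    (hγ : γ ∈ Set.Ioc (1 - 1 / (2 * H)) 1) (hε : ε < H - (H - 1 / 2) / γ) :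
    ε < 1 / 2 ∧ H - 1 / 2 < γ * (H - ε) := by
  have hγ0 : 0 < γ := by
    have : 1 / (2 * H) ≤ 1 := div_le_one_of_le₀ (by linarith) (by linarith)
    linarith [hγ.1]
  have hdiv : H - 1 / 2 ≤ (H - 1 / 2) / γ := le_div_self (sub_nonneg.2 hH) hγ0 hγ.2
  exact ⟨by linarith, (div_lt_iff₀' hγ0).1 (by linarith)⟩

theorem stmt5_general (H γ εt α M K : ℝ) (hH : H ∈ Set.Ico (1 / 2 : ℝ) (3 / 2)) (hεt : εt < 1 / 2)
    (hγ : H - 1 / 2 < γ * (H - εt)) (hα : 0 ≤ α) (hHα : (H - 1 / 2) * α < 1) (hM : 0 ≤ M)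
    (hK : 0 ≤ K) :
    ∃ C > (0 : ℝ), ∀ (E F : Type*) [SeminormedAddCommGroup E] [NormedAddCommGroup F]
      [NormedSpace ℝ F] [CompleteSpace F] (T Kw : ℝ), 0 < T → 0 ≤ Kw →
      ∀ (ψ : E → F) (x : E) (w : ℝ → E),
        (∀ z, ‖ψ z‖ ≤ M) →
        (∀ z₁ z₂, ‖ψ z₁ - ψ z₂‖ ≤ K * (‖z₁ - z₂‖ ^ γ + ‖z₁ - z₂‖)) →
        (∀ u ∈ Set.Icc (0 : ℝ) T, ∀ s ∈ Set.Icc (0 : ℝ) T,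
          ‖w u - w s‖ ≤ Kw * |u - s| ^ (H - εt)) →
        (∫ t in 0..T, ‖weylInverse H (fun u ↦ ψ (x + w u)) t‖ ^ α)
          ≤ C * (T ^ ((1 / 2 - H) * α + 1)
              + T ^ ((γ * (H - εt) + 1 / 2 - H) * α + 1) * Kw ^ (γ * α)
              + T ^ ((1 / 2 - εt) * α + 1) * Kw ^ α) := by
  have hβ : H - 1 / 2 < H - εt := by linarith
  have hexp : H - εt + 1 / 2 - H = 1 / 2 - εt := by ring
  have he₁ : 0 < (1 / 2 - H) * α + 1 := by linarith
  have he₂ : 0 < (γ * (H - εt) + 1 / 2 - H) * α + 1 :=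
    add_pos_of_nonneg_of_pos (mul_nonneg (by linarith) hα) one_pos
  have hc₁ := weylBoundaryConst_nonneg hH
  have hc₂ := weylHolderConst_nonneg hH hγ
  have hc₃ := weylHolderConst_nonneg hH hβ
  let C₁ := 3 ^ α * (weylBoundaryConst H * M) ^ α / ((1 / 2 - H) * α + 1)
  let C₂ := 3 ^ α * (weylHolderConst H (γ * (H - εt)) * K) ^ α /
    ((γ * (H - εt) + 1 / 2 - H) * α + 1)
  let C₃ := 3 ^ α * (weylHolderConst H (H - εt) * K) ^ α / ((1 / 2 - εt) * α + 1)
  have hC₁ : 0 ≤ C₁ := by positivity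
  have hC₂ : 0 ≤ C₂ := by positivity
  have hC₃ : 0 ≤ C₃ := by positivity
  refine ⟨C₁ + C₂ + C₃ + 1, by positivity, fun E F _ _ _ _ T Kw hT hKw ψ x w hψM hψ hw ↦ ?_⟩
  have hbound :=
    integral_norm_weylInverse_comp_rpow_le (x := x) hH hγ hβ hα hHα hM hK hT.le hKw hψM hψ hw
  rw [hexp] at hbound
  refine hbound.trans ?_
  rw [mul_add, mul_add]
  gcongr <;> linarith

/-- `L^α` bound on `(0,T)` for the Weyl-representation formula `G(t)` for
`K_H^{-1}(∫₀^· ψ(x+w(u)) du)`, with `ψ` bounded by `M` and `(γ,1)`-Hölder-type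
continuous with constant `K`, and `w` being `(H−ε̃)`-Hölder with constant `K_w`. -/
theorem stmt5 (H γ εt α M K : ℝ) (hH : H ∈ Set.Ioo (1/2 : ℝ) 1)
    (hγ : γ ∈ Set.Ioc (1 - 1/(2*H)) 1) (hεt : εt ∈ Set.Ioo (0:ℝ) (H - (H - 1/2)/γ))
    (hα : α ∈ Set.Ioo (1:ℝ) (1/(H - 1/2))) (hM : 0 ≤ M) (hK : 0 ≤ K) :
    ∃ C > (0:ℝ),
      ∀ (d m : ℕ) (T Kw : ℝ), 0 < T → 0 ≤ Kw →
      ∀ (ψ : EuclideanSpace ℝ (Fin d) → EuclideanSpace ℝ (Fin m))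
        (x : EuclideanSpace ℝ (Fin d)) (w : ℝ → EuclideanSpace ℝ (Fin d)),
        (∀ z, ‖ψ z‖ ≤ M) →
        (∀ z₁ z₂, ‖ψ z₁ - ψ z₂‖ ≤ K * (‖z₁ - z₂‖ ^ γ + ‖z₁ - z₂‖)) →
        (∀ u ∈ Set.Icc (0:ℝ) T, ∀ s ∈ Set.Icc (0:ℝ) T,
          ‖w u - w s‖ ≤ Kw * |u - s| ^ (H - εt)) →
        (∫ t in (0:ℝ)..T,
            ‖(1 / Real.Gamma (3/2 - H)) •
                ((t ^ (1/2 - H)) • ψ (x + w t)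
                  + ((H - 1/2) * t ^ (H - 1/2) *
                      ∫ r in (0:ℝ)..t,
                        (t ^ (1/2 - H) - r ^ (1/2 - H)) * (t - r) ^ (-(1/2) - H)) •
                        ψ (x + w t)
                  + ((H - 1/2) * t ^ (H - 1/2)) •
                      ∫ r in (0:ℝ)..t,
                        ((t - r) ^ (-(1/2) - H) * r ^ (1/2 - H)) •
                          (ψ (x + w t) - ψ (x + w r)))‖ ^ α)
          ≤ C * (T ^ ((1/2 - H)*α + 1)
              + T ^ ((γ*(H - εt) + 1/2 - H)*α + 1) * Kw ^ (γ*α)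
              + T ^ ((1/2 - εt)*α + 1) * Kw ^ α) := by
  obtain ⟨hε, hγβ⟩ := lt_half_and_sub_half_lt_mul_of_lt_sub_div hH.1.le hγ hεt.2
  obtain ⟨C, hC, hbound⟩ := stmt5_general H γ εt α M K ⟨hH.1.le, by linarith [hH.2]⟩ hε hγβ
    (by linarith [hα.1]) ((lt_div_iff₀' (sub_pos.2 hH.1)).1 hα.2) hM hK
  exact ⟨C, hC, fun d m ↦ hbound (EuclideanSpace ℝ (Fin d)) (EuclideanSpace ℝ (Fin m))⟩
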